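/- The conserved quantities commute among themselves: under these hypotheses, C_m·C_p = C_p·C_m for all 0 ≤ m,p ≤ r+1. -/

import Mathlib

/-- ξ_{α,n} := M_{α,n} · M_{α,n+1}⁻¹ -/
def xiv {R : Type*} [Ring R] (M Mi : ℕ → ℤ → R) (α : ℕ) (n : ℤ) : R :=
  M α n * Mi α (n + 1)

/-- ξ_{α,n}⁻¹ = M_{α,n+1} · M_{α,n}⁻¹ -/
def xivInv {R : Type*} [Ring R] (M Mi : ℕ → ℤ → R) (α : ℕ) (n : ℤ) : R :=
  M α (n + 1) * Mi α n

/-- x_{α,n} := ξ_{α,n}⁻¹ · ξ_{α-1,n} -/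
def xv {R : Type*} [Ring R] (M Mi : ℕ → ℤ → R) (α : ℕ) (n : ℤ) : R :=
  xivInv M Mi α n * xiv M Mi (α - 1) n

/-- The Miura coefficient C_{m,n} = Σ_{r+1 ≥ α₁ > ⋯ > α_m ≥ 1}
∏_{j=1}^m x_{α_j, n+(r+1-α_j)-(j-1)} (ordered product, j increasing left to right). -/
def CMiura {R : Type*} [Ring R] (M Mi : ℕ → ℤ → R) (r : ℕ) (m : ℕ) (n : ℤ) : R :=
  ∑ S ∈ Finset.powersetCard m (Finset.Icc 1 (r + 1)),
    (((S.sort (· ≤ ·)).reverse.zipIdx).map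
      (fun ji => xv M Mi ji.1 (n + ((r : ℤ) + 1 - (ji.1 : ℤ)) - (ji.2 : ℤ)))).prod

/-!
In the variables `x_{k,n} = ξ_{k,n}⁻¹ ξ_{k-1,n}` and suitable `b_{k,n}`, the `M`-system is a
discrete time evolution of the relativistic Toda chain. Along it, the generating function
`P_k(n) = (D + u x_{k,n}) ⋯ (D + u x_{1,n}) · 1` of the Miura coefficients satisfies
`P_{k+1}(n+1) = P_{k+1}(n) - u b_{k+1,n} P_k(n)`. This eliminates the time shifts, so that `P_k(n)`
is the generating function `T_k` of the Toda Hamiltonians at time `n`, which obeys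
`T_{k+2} = (1 + u x_{k+2}) T_{k+1} - u b_{k+1} T_k`.

At a fixed time the `x_k` and `b_k` commute up to powers of `q`, and `[T_k(s), T_k(t)] = 0` follows
by induction on `k`, together with the symmetry of `[T_{k+1}(s), T_k(t)]` and
`t [T_{k+1}(s), b_{k+1} T_k(t)]` under `s ↔ t`. Taking `s` and `t` to be central indeterminates and
comparing coefficients shows that the Miura coefficients commute.
-/

/-- `x` and `y` commute up to the factor `c`, which is meant to be central. -/
def QCommute {G : Type*} [Mul G] (c x y : G) : Prop :=
  x * y = c * (y * x)

namespace QCommute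

theorem map {G H : Type*} [Mul G] [Mul H] {c x y : G} (h : QCommute c x y) (f : G →ₙ* H) :
    QCommute (f c) (f x) (f y) := by
  simpa only [QCommute, map_mul] using congrArg f h

section Group

variable {G : Type*} [Group G] {q x y z : G} {d e : ℤ}

theorem of_commute (q : G) (h : Commute x y) : QCommute (q ^ (0 : ℤ)) x y := by
  rwa [QCommute, zpow_zero, one_mul, ← commute_iff_eq]

theorem commute (h : QCommute (q ^ (0 : ℤ)) x y) : Commute x y := by
  rwa [QCommute, zpow_zero, one_mul, ← commute_iff_eq] at h

theorem of_eq (h : QCommute (q ^ e) x y) (hed : e = d) : QCommute (q ^ d) x y :=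
  hed ▸ h

theorem symm (h : QCommute (q ^ e) x y) : QCommute (q ^ (-e)) y x := by
  unfold QCommute at *
  rw [h, zpow_neg, inv_mul_cancel_left]

theorem mul_right (hq : ∀ g, Commute q g) (hy : QCommute (q ^ d) x y)
    (hz : QCommute (q ^ e) x z) : QCommute (q ^ (d + e)) x (y * z) := by
  unfold QCommute at *
  calc x * (y * z) = q ^ d * (y * (x * z)) := by rw [← mul_assoc, hy]; simp only [mul_assoc]
    _ = q ^ d * (y * q ^ e * (z * x)) := by rw [hz, mul_assoc y]
    _ = q ^ (d + e) * (y * z * x) := by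
      rw [← ((hq y).zpow_left e).eq, zpow_add]
      simp only [mul_assoc]

theorem inv_right (hq : ∀ g, Commute q g) (h : QCommute (q ^ e) x y) :
    QCommute (q ^ (-e)) x y⁻¹ := by
  have hy : q ^ e * y = y * q ^ e := ((hq y).zpow_left e).eq
  unfold QCommute at *
  calc x * y⁻¹ = q ^ (-e) * (y⁻¹ * (y * q ^ e) * x * y⁻¹) := by group
    _ = q ^ (-e) * (y⁻¹ * (x * y) * y⁻¹) := by rw [← hy, h]; simp only [mul_assoc]
    _ = q ^ (-e) * (y⁻¹ * x) := by group

theorem mul_left (hq : ∀ g, Commute q g) (hx : QCommute (q ^ d) x z)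
    (hy : QCommute (q ^ e) y z) : QCommute (q ^ (d + e)) (x * y) z := by
  simpa only [neg_add, neg_neg] using (mul_right hq hx.symm hy.symm).symm

theorem inv_left (hq : ∀ g, Commute q g) (h : QCommute (q ^ e) x y) :
    QCommute (q ^ (-e)) x⁻¹ y := by
  simpa only [neg_neg] using (inv_right hq h.symm).symm

end Group

end QCommute

/-- The relations of the open quantum relativistic Toda chain with the sites `0, …, N - 1`; the
variable `b i` couples the sites `i` and `i + 1`. -/
structure IsQToda {G : Type*} [Mul G] (q : G) (N : ℕ) (x b : ℕ → G) : Prop where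
  commute_x_x : ∀ {i j}, i < N → j < N → Commute (x i) (x j)
  commute_x_b : ∀ {i j}, i < N → j + 1 < N → i ≠ j → i ≠ j + 1 → Commute (x i) (b j)
  commute_b_b : ∀ {i j}, i + 1 < j → j + 1 < N → Commute (b i) (b j)
  x_b : ∀ {i}, i + 1 < N → QCommute q (x i) (b i)
  b_x : ∀ {i}, i + 1 < N → QCommute q (b i) (x (i + 1))
  b_b : ∀ {i}, i + 2 < N → QCommute q (b i) (b (i + 1))

theorem IsQToda.map {G H : Type*} [Mul G] [Mul H] {q : G} {N : ℕ} {x b : ℕ → G}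
    (h : IsQToda q N x b) (f : G →ₙ* H) : IsQToda (f q) N (fun i ↦ f (x i)) (fun i ↦ f (b i)) where
  commute_x_x hi hj := (h.commute_x_x hi hj).map f
  commute_x_b hi hj hne hne' := (h.commute_x_b hi hj hne hne').map f
  commute_b_b hij hj := (h.commute_b_b hij hj).map f
  x_b hi := (h.x_b hi).map f
  b_x hi := (h.b_x hi).map f
  b_b hi := (h.b_b hi).map f

section TodaGen

variable {K S : Type*} [CommRing K] [Ring S] [Algebra K S]

/-- The generating function `∑ m, uᵐ H_m` of the Hamiltonians of the open relativistic Toda chain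
with the first `k` sites, through its three-term recursion. -/
def todaGen (x b : ℕ → S) (u : K) : ℕ → S
  | 0 => 1
  | 1 => 1 + u • x 0
  | k + 2 =>
    todaGen x b u (k + 1) + u • (x (k + 1) * todaGen x b u (k + 1)) - u • (b k * todaGen x b u k)

theorem commute_todaGen {x b : ℕ → S} {z : S} {k : ℕ} (hx : ∀ i < k, Commute z (x i))
    (hb : ∀ i, i + 1 < k → Commute z (b i)) (u : K) : Commute z (todaGen x b u k) := by
  induction k using Nat.twoStepInduction with
  | zero => exact Commute.one_right z
  | one => exact (Commute.one_right z).add_right ((hx 0 one_pos).smul_right u)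
  | more k ih₀ ih₁ =>
    have hT₀ := ih₀ (fun i hi ↦ hx i (by omega)) (fun i hi ↦ hb i (by omega))
    have hT₁ := ih₁ (fun i hi ↦ hx i (by omega)) (fun i hi ↦ hb i (by omega))
    exact (hT₁.add_right (((hx (k + 1) (by omega)).mul_right hT₁).smul_right u)).sub_right
      (((hb k (by omega)).mul_right hT₀).smul_right u)

attribute [local instance] LieRing.ofAssociativeRing

/-- The symmetries under `s ↔ t` that carry the induction proving that `todaGen x b s k` and
`todaGen x b t k` commute. -/
structure TodaExchange (x b : ℕ → S) (s t : K) (k : ℕ) : Prop where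
  commute : Commute (todaGen x b s k) (todaGen x b t k)
  commute_succ : Commute (todaGen x b s (k + 1)) (todaGen x b t (k + 1))
  lie_symm :
    ⁅todaGen x b s (k + 1), todaGen x b t k⁆ = ⁅todaGen x b t (k + 1), todaGen x b s k⁆
  smul_lie_symm :
    t • ⁅todaGen x b s (k + 1), b k * todaGen x b t k⁆ =
      s • ⁅todaGen x b t (k + 1), b k * todaGen x b s k⁆

theorem commute_todaGen_one (x b : ℕ → S) (s t : K) :
    Commute (todaGen x b s 1) (todaGen x b t 1) :=
  (Commute.one_left _).add_left
    (((Commute.one_right _).add_right ((Commute.refl (x 0)).smul_right t)).smul_left s)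

theorem todaExchange_zero (x b : ℕ → S) (s t : K) : TodaExchange x b s t 0 where
  commute := Commute.one_left _
  commute_succ := commute_todaGen_one x b s t
  lie_symm := by simp only [todaGen, Ring.lie_def, mul_one, one_mul, sub_self]
  smul_lie_symm := by
    simp only [todaGen, Ring.lie_def, mul_one, add_mul, mul_add, one_mul, smul_mul_assoc,
      mul_smul_comm]
    module

namespace IsQToda

variable {q : K} {N : ℕ} {x b : ℕ → S} (h : IsQToda (algebraMap K S q) N x b)
include h

local notation "T" => todaGen x b

theorem x_mul_b {i : ℕ} (hi : i + 1 < N) : x i * b i = q • (b i * x i) := by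
  rw [Algebra.smul_def]
  exact h.x_b hi

theorem b_mul_x_succ {i : ℕ} (hi : i + 1 < N) : b i * x (i + 1) = q • (x (i + 1) * b i) := by
  rw [Algebra.smul_def]
  exact h.b_x hi

theorem b_mul_b_succ {i : ℕ} (hi : i + 2 < N) : b i * b (i + 1) = q • (b (i + 1) * b i) := by
  rw [Algebra.smul_def]
  exact h.b_b hi

theorem commute_x_todaGen {i k : ℕ} (hk : k ≤ i) (hi : i < N) (u : K) : Commute (x i) (T u k) :=
  commute_todaGen (fun j hj ↦ h.commute_x_x hi (by omega))
    (fun j hj ↦ h.commute_x_b hi (by omega) (by omega) (by omega)) u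

theorem commute_b_todaGen {i k : ℕ} (hk : k ≤ i) (hi : i + 1 < N) (u : K) :
    Commute (b i) (T u k) :=
  commute_todaGen (fun j hj ↦ (h.commute_x_b (by omega) hi (by omega) (by omega)).symm)
    (fun j hj ↦ (h.commute_b_b (by omega) hi).symm) u

theorem todaGen_succ_mul_b {k : ℕ} (hk : k + 1 < N) (u : K) :
    T u (k + 1) * b k = q • (b k * T u (k + 1)) + (1 - q) • (b k * T u k) := by
  cases k with
  | zero =>
    simp only [todaGen, add_mul, mul_add, one_mul, mul_one, smul_mul_assoc, mul_smul_comm,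
      h.x_mul_b hk]
    module
  | succ k =>
    have hT₁ := (h.commute_b_todaGen le_rfl hk u).eq
    have hT₀ := (h.commute_b_todaGen (Nat.le_succ k) hk u).eq
    have hx : x (k + 1) * T u (k + 1) * b (k + 1) =
        q • (b (k + 1) * (x (k + 1) * T u (k + 1))) := by
      rw [mul_assoc, ← hT₁, ← mul_assoc, h.x_mul_b hk, smul_mul_assoc, mul_assoc]
    have hb : b k * T u k * b (k + 1) = q • (b (k + 1) * (b k * T u k)) := by
      rw [mul_assoc, ← hT₀, ← mul_assoc, h.b_mul_b_succ hk, smul_mul_assoc, mul_assoc]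
    simp only [todaGen, add_mul, sub_mul, smul_mul_assoc, hx, hb, ← hT₁, mul_add, mul_sub,
      mul_smul_comm]
    module

theorem lie_todaGen_add_two_todaGen {s t : K} {k : ℕ} (hk : k + 1 < N)
    (hcomm : Commute (T s (k + 1)) (T t (k + 1))) :
    ⁅T s (k + 2), T t (k + 1)⁆ = s • ⁅T t (k + 1), b k * T s k⁆ := by
  have hx := (h.commute_x_todaGen le_rfl hk t).mul_left hcomm
  simp only [todaGen, sub_lie, add_lie, smul_lie, hcomm.lie_eq, hx.lie_eq]
  rw [← lie_skew]
  module

theorem lie_x_mul_todaGen_b_mul {k : ℕ} (hk : k + 1 < N) (s t : K) :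
    ⁅x (k + 1) * T s (k + 1), b k * T t k⁆ =
      b k * x (k + 1) * ⁅T s (k + 1), T t k⁆ + (1 - q) • (x (k + 1) * b k * (T s k * T t k)) := by
  have hx := (h.commute_x_todaGen (Nat.le_succ k) hk t).eq
  calc ⁅x (k + 1) * T s (k + 1), b k * T t k⁆
    _ = x (k + 1) * (T s (k + 1) * b k) * T t k - b k * (T t k * x (k + 1)) * T s (k + 1) := by
      simp only [Ring.lie_def, mul_assoc]
    _ = q • (x (k + 1) * b k) * (T s (k + 1) * T t k)
        + (1 - q) • (x (k + 1) * b k * (T s k * T t k))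
        - b k * x (k + 1) * (T t k * T s (k + 1)) := by
      rw [h.todaGen_succ_mul_b hk, ← hx]
      simp only [mul_add, add_mul, smul_mul_assoc, mul_smul_comm, mul_assoc]
    _ = _ := by
      rw [← h.b_mul_x_succ hk, Ring.lie_def, mul_sub]
      abel

theorem lie_todaGen_add_two_b_mul {s t : K} {k : ℕ} (hk : k + 2 < N)
    (hcomm : Commute (T s (k + 1)) (T t (k + 1))) :
    ⁅T s (k + 2), b (k + 1) * T t (k + 1)⁆ =
      s • (b (k + 1) * ((q - 1) • (x (k + 1) * (T s (k + 1) * T t (k + 1)))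
        + (1 - q) • (b k * (T t k * T s k)) + q • (b k * ⁅T t (k + 1), T s k⁆))) := by
  have hx : T t (k + 1) * (x (k + 1) * T s (k + 1)) = x (k + 1) * (T s (k + 1) * T t (k + 1)) := by
    rw [← mul_assoc, ← (h.commute_x_todaGen le_rfl (by omega) t).eq, mul_assoc, hcomm.eq]
  have hb : T t (k + 1) * (b k * T s k) =
      q • (b k * (T t (k + 1) * T s k)) + (1 - q) • (b k * (T t k * T s k)) := by
    rw [← mul_assoc, h.todaGen_succ_mul_b (by omega)]
    simp only [add_mul, smul_mul_assoc, mul_assoc]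
  rw [Ring.lie_def, ← mul_assoc, h.todaGen_succ_mul_b hk, todaGen, Ring.lie_def]
  simp only [add_mul, sub_mul, mul_add, mul_sub, smul_mul_assoc, mul_smul_comm, mul_assoc, hx, hb,
    hcomm.eq]
  module

theorem commute_todaGen_add_two {s t : K} {k : ℕ} (hk : k + 1 < N) (e : TodaExchange x b s t k) :
    Commute (T s (k + 2)) (T t (k + 2)) := by
  have hx (u : K) := h.commute_x_todaGen le_rfl hk u
  have hb (u : K) := h.commute_b_todaGen le_rfl hk u
  have hxT := (hx t).mul_left e.commute_succ
  have hTx := (hx s).symm.mul_right e.commute_succ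
  have hxx : Commute (x (k + 1) * T s (k + 1)) (x (k + 1) * T t (k + 1)) :=
    ((Commute.refl _).mul_right (hx t)).mul_left hTx
  have hbb : Commute (b k * T s k) (b k * T t k) :=
    ((Commute.refl _).mul_right (hb t)).mul_left ((hb s).symm.mul_right e.commute)
  have hxb : ⁅x (k + 1) * T s (k + 1), b k * T t k⁆ = ⁅x (k + 1) * T t (k + 1), b k * T s k⁆ := by
    rw [h.lie_x_mul_todaGen_b_mul hk, h.lie_x_mul_todaGen_b_mul hk, e.lie_symm, e.commute.eq]
  rw [commute_iff_lie_eq]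
  simp only [todaGen, sub_lie, add_lie, smul_lie, lie_sub, lie_add, LieAlgebra.lie_smul,
    e.commute_succ.lie_eq, hxT.lie_eq, hTx.lie_eq, hxx.lie_eq, hbb.lie_eq]
  rw [← lie_skew (b k * T s k) (T t (k + 1)),
    ← lie_skew (b k * T s k) (x (k + 1) * T t (k + 1)), hxb]
  linear_combination (norm := module) -e.smul_lie_symm

theorem todaExchange_succ {s t : K} {k : ℕ} (hk : k + 2 < N) (e : TodaExchange x b s t k) :
    TodaExchange x b s t (k + 1) where
  commute := e.commute_succ
  commute_succ := h.commute_todaGen_add_two (by omega) e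
  lie_symm := by
    rw [h.lie_todaGen_add_two_todaGen (by omega) e.commute_succ,
      h.lie_todaGen_add_two_todaGen (by omega) e.commute_succ.symm, e.smul_lie_symm]
  smul_lie_symm := by
    rw [h.lie_todaGen_add_two_b_mul hk e.commute_succ,
      h.lie_todaGen_add_two_b_mul hk e.commute_succ.symm, e.commute_succ.eq, e.commute.eq,
      e.lie_symm]
    module

theorem todaExchange (s t : K) {k : ℕ} (hk : k + 1 < N) : TodaExchange x b s t k := by
  induction k with
  | zero => exact todaExchange_zero x b s t
  | succ k ih => exact h.todaExchange_succ hk (ih (by omega))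

theorem commute_todaGen_todaGen (s t : K) : ∀ {k : ℕ}, k ≤ N → Commute (T s k) (T t k)
  | 0, _ => Commute.one_left _
  | 1, _ => commute_todaGen_one x b s t
  | _ + 2, hk => h.commute_todaGen_add_two hk (h.todaExchange s t hk)

end IsQToda

end TodaGen

section MiuraGen

/-- The discrete equations of motion of the relativistic Toda chain with `N` sites, the second
argument of `x` and `b` being the time. -/
structure IsTodaFlow {S : Type*} [Ring S] (N : ℕ) (x b : ℕ → ℤ → S) : Prop where
  x_zero_succ : ∀ n, 1 < N → x 0 (n + 1) - x 0 n = -b 0 n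
  x_succ_succ : ∀ {k} n, k + 2 < N → x (k + 1) (n + 1) - x (k + 1) n = b k (n + 1) - b (k + 1) n
  x_mul_b : ∀ {k} n, k + 1 < N → x (k + 1) (n + 1) * b k n = b k (n + 1) * x k n

theorem IsTodaFlow.map {S S' : Type*} [Ring S] [Ring S'] {N : ℕ} {x b : ℕ → ℤ → S}
    (h : IsTodaFlow N x b) (f : S →+* S') :
    IsTodaFlow N (fun k n ↦ f (x k n)) (fun k n ↦ f (b k n)) where
  x_zero_succ n hN := by simpa only [map_sub, map_neg] using congrArg f (h.x_zero_succ n hN)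
  x_succ_succ n hk := by simpa only [map_sub] using congrArg f (h.x_succ_succ n hk)
  x_mul_b n hk := by simpa only [map_mul] using congrArg f (h.x_mul_b n hk)

variable {K S : Type*} [CommRing K] [Ring S] [Algebra K S]

/-- The generating function `∑ m, uᵐ C_m` of the Miura coefficients: the ordered product
`(D + u x_{k-1}) ⋯ (D + u x_0)`, with `D` the shift of time, applied to the constant `1`. -/
def miuraGen (x : ℕ → ℤ → S) (u : K) : ℕ → ℤ → S
  | 0, _ => 1
  | k + 1, n => miuraGen x u k (n + 1) + u • (x k n * miuraGen x u k n)

theorem miuraGen_succ (x : ℕ → ℤ → S) (u : K) (k : ℕ) (n : ℤ) :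
    miuraGen x u (k + 1) n = miuraGen x u k (n + 1) + u • (x k n * miuraGen x u k n) :=
  rfl

theorem miuraGen_congr {x y : ℕ → ℤ → S} (u : K) {k : ℕ} (hxy : ∀ i < k, ∀ n, x i n = y i n)
    (n : ℤ) : miuraGen x u k n = miuraGen y u k n := by
  induction k generalizing n with
  | zero => rfl
  | succ k ih =>
    have hk := ih fun i hi ↦ hxy i (by omega)
    rw [miuraGen_succ, miuraGen_succ, hk, hk, hxy k (by omega)]

theorem map_miuraGen {K' S' : Type*} [CommRing K'] [Ring S'] [Algebra K' S'] (f : S →+* S')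
    {u : K} {v : K'} (hf : ∀ z, f (u • z) = v • f z) (x : ℕ → ℤ → S) (k : ℕ) (n : ℤ) :
    f (miuraGen x u k n) = miuraGen (fun i n ↦ f (x i n)) v k n := by
  induction k generalizing n with
  | zero => exact map_one f
  | succ k ih => simp only [miuraGen_succ, map_add, hf, map_mul, ih]

namespace IsTodaFlow

variable {N : ℕ} {x b : ℕ → ℤ → S} (h : IsTodaFlow N x b)
include h

local notation "P" => miuraGen x

theorem miuraGen_succ_add_one (u : K) {k : ℕ} (hk : k + 1 < N) (n : ℤ) :
    P u (k + 1) (n + 1) = P u (k + 1) n - u • (b k n * P u k n) := by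
  induction k generalizing n with
  | zero =>
    simp only [miuraGen, mul_one]
    linear_combination (norm := module) u • h.x_zero_succ n hk
  | succ k ih =>
    have hx := congrArg (· * P u (k + 1) n) (h.x_succ_succ n hk)
    have hxb := congrArg (· * P u k n) (h.x_mul_b n (by omega : k + 1 < N))
    have hP := congrArg (b k (n + 1) * ·) (miuraGen_succ x u k n)
    simp only [sub_mul, mul_assoc, mul_add, mul_smul_comm] at hx hxb hP
    rw [miuraGen_succ, miuraGen_succ x u (k + 1) n, ih (by omega) (n + 1), ih (by omega) n]
    simp only [mul_sub, mul_smul_comm]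
    linear_combination (norm := module) u • hx - u • u • hxb + u • hP

theorem miuraGen_eq_todaGen (u : K) (n : ℤ) {k : ℕ} (hk : k ≤ N) :
    P u k n = todaGen (fun i ↦ x i n) (fun i ↦ b i n) u k := by
  induction k using Nat.twoStepInduction with
  | zero => rfl
  | one => simp only [miuraGen, todaGen, mul_one]
  | more k ih₀ ih₁ =>
    rw [todaGen, ← ih₀ (by omega), ← ih₁ (by omega), miuraGen_succ, h.miuraGen_succ_add_one u hk]
    abel

theorem commute_miuraGen {q : K} {n : ℤ}
    (hT : IsQToda (algebraMap K S q) N (fun i ↦ x i n) (fun i ↦ b i n)) (s t : K) :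
    Commute (P s N n) (P t N n) := by
  rw [h.miuraGen_eq_todaGen s n le_rfl, h.miuraGen_eq_todaGen t n le_rfl]
  exact hT.commute_todaGen_todaGen s t le_rfl

end IsTodaFlow

end MiuraGen

section Polynomial

open Polynomial

variable {R : Type*} [Ring R]

theorem commute_coeff_of_commute_C_map {P Q : R[X]} (h : Commute (C P) (Q.map C)) (m p : ℕ) :
    Commute (P.coeff m) (Q.coeff p) := by
  have hcoeff := congrArg (fun F : R[X][X] ↦ (F.coeff p).coeff m) h.eq
  simp only [coeff_C_mul, coeff_mul_C, coeff_map] at hcoeff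
  exact hcoeff

theorem C_mem_center {z : R} (hz : z ∈ Subring.center R) : C z ∈ Subring.center R[X] := by
  refine Subring.mem_center_iff.2 fun P ↦ ?_
  ext m
  rw [coeff_mul_C, coeff_C_mul, Subring.mem_center_iff.1 hz]

/-- The indeterminate as a central scalar, by which `R[X]` is an algebra over its center even when
`R` is not commutative. -/
noncomputable def centralX (R : Type*) [Ring R] : Subring.center R[X] :=
  ⟨X, Subring.mem_center_iff.2 fun P ↦ (commute_X P).eq.symm⟩

theorem centralX_smul (P : R[X]) : centralX R • P = X * P :=
  rfl

/-- `miuraGen` with an indeterminate parameter; its coefficients are the Miura coefficients. -/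
noncomputable def miuraPoly (x : ℕ → ℤ → R) (k : ℕ) (n : ℤ) : R[X] :=
  miuraGen (fun i n ↦ C (x i n)) (centralX R) k n

theorem miuraPoly_succ (x : ℕ → ℤ → R) (k : ℕ) (n : ℤ) :
    miuraPoly x (k + 1) n = miuraPoly x k (n + 1) + X * (C (x k n) * miuraPoly x k n) :=
  rfl

theorem IsTodaFlow.commute_coeff_miuraPoly {q : R} (hq : q ∈ Subring.center R) {N : ℕ}
    {x b : ℕ → ℤ → R} (h : IsTodaFlow N x b) {n : ℤ}
    (hT : IsQToda q N (fun i ↦ x i n) (fun i ↦ b i n)) (m p : ℕ) :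
    Commute ((miuraPoly x N n).coeff m) ((miuraPoly x N n).coeff p) := by
  let s : Subring.center R[X][X] := ⟨C X, C_mem_center (centralX R).2⟩
  have hs : C (miuraPoly x N n) = miuraGen (fun i n ↦ C (C (x i n))) s N n :=
    map_miuraGen C (fun P ↦ C_mul) _ N n
  have ht : (miuraPoly x N n).map C =
      miuraGen (fun i n ↦ C (C (x i n))) (centralX R[X]) N n := by
    have hX (P : R[X]) : mapRingHom C (centralX R • P) = centralX R[X] • mapRingHom C P := by
      simp only [centralX_smul, map_mul, coe_mapRingHom, map_X]
    simpa only [miuraPoly, coe_mapRingHom, map_C] using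
      map_miuraGen (mapRingHom (C : R →+* R[X])) hX (fun i n ↦ C (x i n)) N n
  apply commute_coeff_of_commute_C_map
  rw [hs, ht]
  exact (h.map (C.comp C)).commute_miuraGen (q := ⟨C (C q), C_mem_center (C_mem_center hq)⟩)
    (hT.map (C.comp C : R →+* R[X][X]).toMonoidHom.toMulHom) s (centralX R[X])

end Polynomial

section MiuraSum

variable {α : Type*}

theorem reverse_sort_le [LinearOrder α] (s : Finset α) :
    (s.sort (· ≤ ·)).reverse = s.sort (· ≥ ·) :=
  s.sortedLT_sort.reverse.eq_of_mem_iff s.sortedGT_sort fun a ↦ by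
    simp only [List.mem_reverse, Finset.mem_sort]

theorem sum_powersetCard_succ_insert [DecidableEq α] {β : Type*} [AddCommMonoid β] {a : α}
    {s : Finset α} (ha : a ∉ s) (m : ℕ) (f : Finset α → β) :
    ∑ t ∈ (insert a s).powersetCard (m + 1), f t =
      ∑ t ∈ s.powersetCard (m + 1), f t + ∑ t ∈ s.powersetCard m, f (insert a t) := by
  have notMem {l : ℕ} {t : Finset α} (ht : t ∈ s.powersetCard l) : a ∉ t :=
    fun hat ↦ ha ((Finset.mem_powersetCard.1 ht).1 hat)
  have hdisj : Disjoint (s.powersetCard (m + 1)) ((s.powersetCard m).image (insert a)) := by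
    refine Finset.disjoint_left.2 fun t ht ht' ↦ notMem ht ?_
    obtain ⟨t, -, rfl⟩ := Finset.mem_image.1 ht'
    exact Finset.mem_insert_self a t
  have hinj : Set.InjOn (insert a) (s.powersetCard m : Set (Finset α)) := fun t ht t' ht' h ↦ by
    rw [← Finset.erase_insert (notMem ht), h, Finset.erase_insert (notMem ht')]
  rw [Finset.powersetCard_succ_insert ha, Finset.sum_union hdisj, Finset.sum_image hinj]

variable {R : Type*} [Ring R]

/-- The product of `x_{a, n - a - j}` over the elements `a` of `s` in decreasing order, where
`j = 0, 1, …` is the position of `a`. -/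
def miuraMonomial (x : ℕ → ℤ → R) (n : ℤ) (s : Finset ℕ) : R :=
  ((s.sort (· ≥ ·)).zipIdx.map fun aj ↦ x aj.1 (n - aj.1 - aj.2)).prod

/-- The `m`-th Miura coefficient of `x 1, …, x k` at time `n`. -/
def miuraCoeff (x : ℕ → ℤ → R) (k m : ℕ) (n : ℤ) : R :=
  ∑ s ∈ (Finset.Icc 1 k).powersetCard m, miuraMonomial x (n + k) s

variable (x : ℕ → ℤ → R)

theorem miuraMonomial_insert {a : ℕ} {s : Finset ℕ} (ha : ∀ i ∈ s, i < a) (n : ℤ) :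
    miuraMonomial x n (insert a s) = x a (n - a) * miuraMonomial x (n - 1) s := by
  have hsort : (insert a s).sort (· ≥ ·) = a :: s.sort (· ≥ ·) :=
    Finset.sort_insert _ (fun i hi ↦ (ha i hi).le) (fun h ↦ (ha a h).false)
  rw [miuraMonomial, hsort, List.zipIdx_cons', List.map_cons, List.prod_cons, List.map_map,
    Nat.cast_zero, sub_zero, miuraMonomial]
  congr 3
  funext ⟨i, j⟩
  simp only [Function.comp_apply, Prod.map_fst, Prod.map_snd, id_eq, Nat.cast_add, Nat.cast_one]
  congr 1
  ring

theorem miuraCoeff_zero_right (k : ℕ) (n : ℤ) : miuraCoeff x k 0 n = 1 := by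
  simp only [miuraCoeff, Finset.powersetCard_zero, Finset.sum_singleton, miuraMonomial,
    Finset.sort_empty, List.zipIdx_nil, List.map_nil, List.prod_nil]

theorem miuraCoeff_zero_left_succ (m : ℕ) (n : ℤ) : miuraCoeff x 0 (m + 1) n = 0 := by
  rw [miuraCoeff, Finset.powersetCard_eq_empty.2 (by simp), Finset.sum_empty]

theorem miuraCoeff_succ_succ (k m : ℕ) (n : ℤ) :
    miuraCoeff x (k + 1) (m + 1) n =
      miuraCoeff x k (m + 1) (n + 1) + x (k + 1) n * miuraCoeff x k m n := by
  have hk : k + 1 ∉ Finset.Icc 1 k := by simp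
  rw [miuraCoeff, ← Finset.insert_Icc_right_eq_Icc_add_one (by omega),
    sum_powersetCard_succ_insert hk, miuraCoeff, miuraCoeff, Finset.mul_sum]
  congr 1
  · push_cast
    simp only [add_assoc, add_comm (1 : ℤ)]
  · refine Finset.sum_congr rfl fun s hs ↦ ?_
    have hlt (i : ℕ) (hi : i ∈ s) : i < k + 1 :=
      Nat.lt_succ_of_le (Finset.mem_Icc.1 ((Finset.mem_powersetCard.1 hs).1 hi)).2
    rw [miuraMonomial_insert x hlt]
    push_cast
    ring_nf

theorem coeff_miuraPoly (k m : ℕ) (n : ℤ) :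
    (miuraPoly (fun i ↦ x (i + 1)) k n).coeff m = miuraCoeff x k m n := by
  induction k generalizing m n with
  | zero =>
    cases m with
    | zero => exact Polynomial.coeff_one_zero.trans (miuraCoeff_zero_right x 0 n).symm
    | succ m =>
      rw [miuraCoeff_zero_left_succ]
      exact Polynomial.coeff_one.trans (if_neg (by omega))
  | succ k ih =>
    rw [miuraPoly_succ, Polynomial.coeff_add, ih]
    cases m with
    | zero =>
      simp only [miuraCoeff_zero_right, Polynomial.coeff_X_mul_zero, add_zero]
    | succ m =>
      rw [Polynomial.coeff_X_mul, Polynomial.coeff_C_mul, ih, miuraCoeff_succ_succ]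

end MiuraSum

section MSystem

section Group

variable {G : Type*} [Group G]

/-- The commutation relations of the quantum `M`-system at equal and at consecutive times. -/
structure IsMTorus (q : G) (N : ℕ) (M : ℕ → ℤ → G) : Prop where
  central : ∀ g, Commute q g
  commute : ∀ {i j}, i ≤ N → j ≤ N → ∀ n, Commute (M i n) (M j n)
  qcommute : ∀ {i j}, i ≤ N → j ≤ N → ∀ n,
    QCommute (q ^ ((min i j : ℕ) : ℤ)) (M i n) (M j (n + 1))

/-- `ξ_{k,n}⁻¹`, the ratio of consecutive terms of the sequence `M k`. -/
def mRatio (M : ℕ → ℤ → G) (k : ℕ) (n : ℤ) : G :=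
  M k (n + 1) * (M k n)⁻¹

/-- The position-type Toda variable of an `M`-system: the paper's `x_{k+1,n}`. -/
def todaX (M : ℕ → ℤ → G) (k : ℕ) (n : ℤ) : G :=
  mRatio M (k + 1) n * (mRatio M k n)⁻¹

/-- The interaction Toda variable of an `M`-system, coupling the sites `k` and `k + 1`. -/
def todaB (M : ℕ → ℤ → G) (k : ℕ) (n : ℤ) : G :=
  M (k + 2) (n + 1) * (M (k + 1) (n + 1))⁻¹ * ((M (k + 1) n)⁻¹ * M k n)

namespace IsMTorus

variable {q : G} {N : ℕ} {M : ℕ → ℤ → G} (h : IsMTorus q N M)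
include h

theorem commute_mRatio {i j : ℕ} (hi : i ≤ N) (hj : j ≤ N) (n : ℤ) :
    Commute (mRatio M i n) (mRatio M j n) := by
  have hM := ((h.qcommute hi hj n).mul_right h.central
    ((QCommute.of_commute q (h.commute hi hj n)).inv_right h.central))
  have hM' := ((QCommute.of_commute q (h.commute hi hj (n + 1))).mul_right h.central
    ((h.qcommute hj hi n).symm.inv_right h.central))
  exact ((hM'.mul_left h.central (hM.inv_left h.central)).of_eq (by omega)).commute

theorem commute_todaX {i j : ℕ} (hi : i < N) (hj : j < N) (n : ℤ) :
    Commute (todaX M i n) (todaX M j n) := by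
  have hratio {i j : ℕ} (hi : i ≤ N) (hj : j ≤ N) := h.commute_mRatio hi hj n
  exact ((hratio hi hj).mul_right (hratio hi hj.le).inv_right).mul_left
    ((hratio hi.le hj).mul_right (hratio hi.le hj.le).inv_right).inv_left

theorem qcommute_todaB {i j : ℕ} (hi : i ≤ N) (hj : j + 1 < N) (n : ℤ) :
    QCommute (q ^ (if j + 2 ≤ i then 1 else 0 : ℤ)) (M i n) (todaB M j n) := by
  have hc := h.central
  refine (((h.qcommute hi hj n).mul_right hc ((h.qcommute hi hj.le n).inv_right hc)).mul_right hc
    (((QCommute.of_commute q (h.commute hi hj.le n)).inv_right hc).mul_right hc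
      (QCommute.of_commute q (h.commute hi (by omega) n)))).of_eq ?_
  split_ifs <;> omega

theorem qcommute_succ_todaB {i j : ℕ} (hi : i ≤ N) (hj : j + 1 < N) (n : ℤ) :
    QCommute (q ^ (if j + 1 ≤ i then 1 else 0 : ℤ)) (M i (n + 1)) (todaB M j n) := by
  have hc := h.central
  refine (((QCommute.of_commute q (h.commute hi hj (n + 1))).mul_right hc
    ((QCommute.of_commute q (h.commute hi hj.le (n + 1))).inv_right hc)).mul_right hc
    (((h.qcommute hj.le hi n).symm.inv_right hc).mul_right hc
      (h.qcommute (by omega) hi n).symm)).of_eq ?_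
  split_ifs <;> omega

theorem qcommute_todaX_todaB {i j : ℕ} (hi : i < N) (hj : j + 1 < N) (n : ℤ) :
    QCommute (q ^ ((if i = j then 1 else 0) - (if i = j + 1 then 1 else 0) : ℤ))
      (todaX M i n) (todaB M j n) := by
  have hc := h.central
  have hratio {i : ℕ} (hi : i ≤ N) :=
    (h.qcommute_succ_todaB hi hj n).mul_left hc ((h.qcommute_todaB hi hj n).inv_left hc)
  refine ((hratio hi).mul_left hc ((hratio hi.le).inv_left hc)).of_eq ?_
  split_ifs <;> omega

theorem qcommute_todaB_todaB {i j : ℕ} (hi : i + 1 < N) (hj : j + 1 < N) (n : ℤ) :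
    QCommute (q ^ ((if j = i + 1 then 1 else 0) - (if i = j + 1 then 1 else 0) : ℤ))
      (todaB M i n) (todaB M j n) := by
  have hc := h.central
  have hM {i : ℕ} (hi : i ≤ N) := h.qcommute_todaB hi hj n
  have hM' {i : ℕ} (hi : i ≤ N) := h.qcommute_succ_todaB hi hj n
  refine (((hM' hi).mul_left hc ((hM' hi.le).inv_left hc)).mul_left hc
    (((hM hi.le).inv_left hc).mul_left hc (hM (by omega)))).of_eq ?_
  split_ifs <;> omega

theorem isQToda (n : ℤ) : IsQToda q N (fun k ↦ todaX M k n) (fun k ↦ todaB M k n) where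
  commute_x_x hi hj := h.commute_todaX hi hj n
  commute_x_b hi hj hne hne' :=
    ((h.qcommute_todaX_todaB hi hj n).of_eq (by simp only [hne, hne', if_false, sub_zero])).commute
  commute_b_b hij hj :=
    ((h.qcommute_todaB_todaB (by omega) hj n).of_eq (by split_ifs <;> omega)).commute
  x_b hi := by
    simpa only [zpow_one] using
      (h.qcommute_todaX_todaB (by omega) hi n).of_eq (d := 1) (by split_ifs <;> omega)
  b_x hi := by
    simpa only [zpow_one] using
      (h.qcommute_todaX_todaB hi hi n).symm.of_eq (d := 1) (by split_ifs <;> omega)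
  b_b hi := by
    simpa only [zpow_one] using
      (h.qcommute_todaB_todaB (by omega) hi n).of_eq (d := 1) (by split_ifs <;> omega)

theorem commute_inv_succ_mul {k : ℕ} (hk : k < N) (n : ℤ) :
    Commute ((M (k + 1) n)⁻¹ * M k n) (M k (n + 1)) :=
  ((((h.qcommute hk hk.le n).inv_left h.central).mul_left h.central
    (h.qcommute hk.le hk.le n)).of_eq (by omega)).commute

theorem todaX_succ_mul_todaB {k : ℕ} (hk : k + 1 < N) (n : ℤ) :
    todaX M (k + 1) (n + 1) * todaB M k n = todaB M k (n + 1) * todaX M k n := by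
  set u := (M (k + 2) (n + 1))⁻¹ * M (k + 1) (n + 1) with hu
  set v := (M (k + 1) n)⁻¹ * M k n with hv
  have huM : Commute u (M (k + 1) (n + 1 + 1)) := h.commute_inv_succ_mul hk (n + 1)
  have hvM : Commute v (M k (n + 1)) := h.commute_inv_succ_mul (by omega) n
  have hM₂ : Commute (M (k + 1) (n + 1)) (M (k + 2) (n + 1)) := h.commute hk.le hk (n + 1)
  have hM₀ : Commute (M (k + 1) (n + 1)) (M k (n + 1)) := h.commute hk.le (by omega) (n + 1)
  trans M (k + 2) (n + 1 + 1) * (M (k + 1) (n + 1 + 1))⁻¹ * v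
  · calc todaX M (k + 1) (n + 1) * todaB M k n
      _ = M (k + 2) (n + 1 + 1) * (u * (M (k + 1) (n + 1 + 1))⁻¹) *
          M (k + 2) (n + 1) * (M (k + 1) (n + 1))⁻¹ * v := by
        simp only [todaX, mRatio, todaB, hu, hv]
        group
      _ = M (k + 2) (n + 1 + 1) * (M (k + 1) (n + 1 + 1))⁻¹ * (M (k + 2) (n + 1))⁻¹ *
          (M (k + 1) (n + 1) * M (k + 2) (n + 1)) * (M (k + 1) (n + 1))⁻¹ * v := by
        rw [huM.inv_right.eq, hu]
        group
      _ = _ := by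
        rw [hM₂.eq]
        group
  · calc M (k + 2) (n + 1 + 1) * (M (k + 1) (n + 1 + 1))⁻¹ * v
      _ = M (k + 2) (n + 1 + 1) * (M (k + 1) (n + 1 + 1))⁻¹ * (v * M k (n + 1)) *
          (M k (n + 1))⁻¹ := by group
      _ = M (k + 2) (n + 1 + 1) * (M (k + 1) (n + 1 + 1))⁻¹ * (M (k + 1) (n + 1))⁻¹ *
          (M (k + 1) (n + 1) * M k (n + 1)) * v * (M k (n + 1))⁻¹ := by
        rw [hvM.eq]
        group
      _ = _ := by
        rw [hM₀.eq]
        simp only [todaX, mRatio, todaB, hv]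
        group

theorem todaB_mul_mRatio {k : ℕ} (hk : k + 1 < N) (n : ℤ) :
    todaB M k n * mRatio M k n =
      M (k + 2) (n + 1) * M k (n + 1) * (M (k + 1) (n + 1))⁻¹ * (M (k + 1) n)⁻¹ := by
  have hM : Commute (M (k + 1) (n + 1))⁻¹ (M k (n + 1)) :=
    (h.commute hk.le (by omega) (n + 1)).inv_left
  have hv := h.commute_inv_succ_mul (by omega : k < N) n
  calc todaB M k n * mRatio M k n
    _ = M (k + 2) (n + 1) * (M (k + 1) (n + 1))⁻¹ *
        ((M (k + 1) n)⁻¹ * M k n * M k (n + 1)) * (M k n)⁻¹ := by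
      simp only [todaB, mRatio, mul_assoc]
    _ = M (k + 2) (n + 1) * ((M (k + 1) (n + 1))⁻¹ * M k (n + 1)) * (M (k + 1) n)⁻¹ := by
      rw [hv.eq]
      group
    _ = _ := by
      rw [hM.eq]
      simp only [mul_assoc]

end IsMTorus

end Group

section Ring

variable {R : Type*} [Ring R]

/-- A solution of the quantum `M`-system in invertible elements up to level `N`; the exchange
relations are those below level `N`, where no vanishing `M` occurs. -/
structure IsMSystem (q : Rˣ) (N : ℕ) (M : ℕ → ℤ → Rˣ) : Prop extends IsMTorus q N M where
  zero_left : ∀ n, M 0 n = 1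
  exchange : ∀ {k} n, k + 1 < N →
    (q ^ (k + 1) * M (k + 1) (n + 2) * M (k + 1) n : R) =
      M (k + 1) (n + 1) ^ 2 - M (k + 2) (n + 1) * M k (n + 1)

namespace IsMSystem

variable {q : Rˣ} {N : ℕ} {M : ℕ → ℤ → Rˣ} (h : IsMSystem q N M)
include h

theorem mRatio_zero (n : ℤ) : mRatio M 0 n = 1 := by
  rw [mRatio, h.zero_left, h.zero_left, inv_one, one_mul]

theorem mRatio_succ_time {k : ℕ} (hk : k ≤ N) (n : ℤ) :
    mRatio M k (n + 1) = q ^ k * M k (n + 2) * M k n * (M k (n + 1))⁻¹ * (M k n)⁻¹ := by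
  have hM : (M k (n + 1))⁻¹ * M k n = q ^ k * (M k n * (M k (n + 1))⁻¹) := by
    have hM := ((h.qcommute hk hk n).inv_right h.central).symm
    rwa [neg_neg, min_self, zpow_natCast] at hM
  have hq := ((h.central (M k (n + 2))).pow_left k).eq
  calc mRatio M k (n + 1)
    _ = M k (n + 2) * ((M k (n + 1))⁻¹ * M k n) * (M k n)⁻¹ := by
      rw [mRatio, add_assoc, mul_assoc, mul_inv_cancel_right]
      rfl
    _ = _ := by
      rw [hM, hq]
      simp only [mul_assoc]

theorem mRatio_sub_mRatio {k : ℕ} (hk : k + 1 < N) (n : ℤ) :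
    (mRatio M (k + 1) n - mRatio M (k + 1) (n + 1) : R) = todaB M k n * mRatio M k n := by
  rw [← Units.val_mul, h.todaB_mul_mRatio hk, h.mRatio_succ_time hk.le, mRatio]
  push_cast
  rw [h.exchange n hk, sub_mul, sub_mul, pow_two, mul_assoc (M (k + 1) (n + 1) : R),
    Units.mul_inv, mul_one, sub_sub_cancel]

theorem todaX_succ_sub_todaX_succ {k : ℕ} (hk : k + 2 < N) (n : ℤ) :
    (todaX M (k + 1) (n + 1) - todaX M (k + 1) n : R) = todaB M k (n + 1) - todaB M (k + 1) n := by
  have hy₁ : ((mRatio M (k + 1) n : Rˣ) : R) =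
      mRatio M (k + 1) (n + 1) + todaB M k n * mRatio M k n :=
    sub_eq_iff_eq_add'.1 (h.mRatio_sub_mRatio (by omega) n)
  have hy₂ : ((mRatio M (k + 2) n : Rˣ) : R) =
      mRatio M (k + 2) (n + 1) + todaB M (k + 1) n * mRatio M (k + 1) n :=
    sub_eq_iff_eq_add'.1 (h.mRatio_sub_mRatio hk n)
  have hb : (todaX M (k + 1) (n + 1) * todaB M k n * mRatio M k n : R) =
      todaB M k (n + 1) * mRatio M (k + 1) n := by
    have hXB := congrArg (· * mRatio M k n) (h.todaX_succ_mul_todaB (by omega : k + 1 < N) n)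
    simp only [mul_assoc, todaX, inv_mul_cancel, mul_one] at hXB ⊢
    simpa only [Units.val_mul, mul_assoc] using congrArg Units.val hXB
  refine (mRatio M (k + 1) n).isUnit.mul_right_cancel ?_
  have hX (n : ℤ) :
      (todaX M (k + 1) n * mRatio M (k + 1) n : R) = mRatio M (k + 2) n := by
    rw [← Units.val_mul, todaX, inv_mul_cancel_right]
  calc (todaX M (k + 1) (n + 1) - todaX M (k + 1) n : R) * mRatio M (k + 1) n
    _ = todaX M (k + 1) (n + 1) * (mRatio M (k + 1) (n + 1) + todaB M k n * mRatio M k n)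
        - mRatio M (k + 2) n := by
      rw [sub_mul, hX, ← hy₁]
    _ = todaB M k (n + 1) * mRatio M (k + 1) n - todaB M (k + 1) n * mRatio M (k + 1) n := by
      rw [mul_add, hX, ← mul_assoc, hb, hy₂]
      abel
    _ = _ := (sub_mul _ _ _).symm

theorem isTodaFlow :
    IsTodaFlow N (fun k n ↦ ((todaX M k n : Rˣ) : R)) (fun k n ↦ ((todaB M k n : Rˣ) : R)) where
  x_zero_succ n hN := by
    have hdiff := h.mRatio_sub_mRatio (k := 0) hN n
    simp only [todaX, h.mRatio_zero, inv_one, mul_one, Units.val_one] at hdiff ⊢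
    rw [← hdiff, neg_sub]
  x_succ_succ n hk := h.todaX_succ_sub_todaX_succ hk n
  x_mul_b n hk := by
    simpa only [Units.val_mul] using congrArg Units.val (h.todaX_succ_mul_todaB hk n)

theorem commute_miuraCoeff (hq : (q : R) ∈ Subring.center R) {x : ℕ → ℤ → R}
    (hx : ∀ k < N, ∀ n, x (k + 1) n = (todaX M k n : Rˣ)) (n : ℤ) (m p : ℕ) :
    Commute (miuraCoeff x N m n) (miuraCoeff x N p n) := by
  have hpoly : miuraPoly (fun i ↦ x (i + 1)) N n =
      miuraPoly (fun k n ↦ ((todaX M k n : Rˣ) : R)) N n :=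
    miuraGen_congr _ (fun i hi n ↦ congrArg Polynomial.C (hx i hi n)) n
  rw [← coeff_miuraPoly, ← coeff_miuraPoly, hpoly]
  exact h.isTodaFlow.commute_coeff_miuraPoly hq
    ((h.isQToda n).map (Units.coeHom R).toMulHom) m p

end IsMSystem

end Ring

end MSystem

section MiuraCoefficients

variable {R : Type*} [Ring R] (M Mi : ℕ → ℤ → R)

theorem cMiura_eq_miuraCoeff (r m : ℕ) (n : ℤ) :
    CMiura M Mi r m n = miuraCoeff (xv M Mi) (r + 1) m n := by
  simp only [CMiura, miuraCoeff, miuraMonomial, reverse_sort_le]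
  push_cast
  simp only [add_sub_assoc]

variable {M Mi} {N : ℕ}

theorem xv_succ_eq_todaX {U : ℕ → ℤ → Rˣ} (hU : ∀ k n, k ≤ N → (U k n : R) = M k n)
    (hUinv : ∀ k n, k ≤ N → ((U k n)⁻¹ : Rˣ) = Mi k n) {k : ℕ} (hk : k < N) (n : ℤ) :
    xv M Mi (k + 1) n = (todaX U k n : Rˣ) := by
  simp only [xv, xivInv, xiv, todaX, mRatio, mul_inv_rev, inv_inv, Units.val_mul,
    Nat.add_sub_cancel]
  rw [hU _ _ hk, hUinv _ _ hk, hU _ _ hk.le, hUinv _ _ hk.le]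

theorem exists_units_eq (hMiL : ∀ (α : ℕ) (n : ℤ), α ≤ N → M α n * Mi α n = 1)
    (hMiR : ∀ (α : ℕ) (n : ℤ), α ≤ N → Mi α n * M α n = 1) :
    ∃ U : ℕ → ℤ → Rˣ, (∀ k n, k ≤ N → (U k n : R) = M k n) ∧
      ∀ k n, k ≤ N → ((U k n)⁻¹ : Rˣ) = Mi k n := by
  refine ⟨fun k n ↦ if hk : k ≤ N then ⟨M k n, Mi k n, hMiL k n hk, hMiR k n hk⟩ else 1,
    fun k n hk ↦ ?_, fun k n hk ↦ ?_⟩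
  all_goals simp only [hk, dif_pos, Units.inv_mk]

theorem isMSystem_of_val_eq {q : Rˣ} {U : ℕ → ℤ → Rˣ}
    (hU : ∀ k n, k ≤ N → (U k n : R) = M k n)
    (hq : ∀ x : R, (q : R) * x = x * (q : R)) (hM0 : ∀ n : ℤ, M 0 n = 1)
    (hMsys : ∀ (α : ℕ) (n : ℤ), 1 ≤ α → α < N →
      (q : R) ^ α * M α (n + 1) * M α (n - 1) = M α n ^ 2 - M (α + 1) n * M (α - 1) n)
    (hcom : ∀ (α β ε : ℕ) (n : ℤ), ε ≤ 1 → α ≤ N → β ≤ N →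
      M α n * M β (n + (ε : ℤ)) = (q : R) ^ (ε * min α β) * M β (n + (ε : ℤ)) * M α n) :
    IsMSystem q N U where
  central g := Units.ext (hq g)
  commute {i j} hi hj n := Units.ext <| by
    simpa [hU, hi, hj] using hcom i j 0 n zero_le_one hi hj
  qcommute {i j} hi hj n := Units.ext <| by
    rw [zpow_natCast]
    simpa [hU, hi, hj, mul_assoc] using hcom i j 1 n le_rfl hi hj
  zero_left n := Units.ext <| by
    rw [hU 0 n (Nat.zero_le _), hM0, Units.val_one]
  exchange {k} n hk := by
    have hM := hMsys (k + 1) (n + 1) (by omega) (by omega)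
    rw [add_assoc n, add_sub_cancel_right] at hM
    rw [hU _ _ hk.le, hU _ _ hk.le, hU _ _ hk.le, hU _ _ hk, hU k _ (by omega)]
    exact hM

end MiuraCoefficients

theorem quantum_Q_conserved_quantities_commute_general
    {R : Type*} [Ring R] (q : Rˣ)
    (hq : ∀ x : R, (q : R) * x = x * (q : R))
    (r : ℕ)
    (M Mi : ℕ → ℤ → R)
    (hM0 : ∀ n : ℤ, M 0 n = 1)
    (hMiL : ∀ (α : ℕ) (n : ℤ), α ≤ r + 1 → M α n * Mi α n = 1)
    (hMiR : ∀ (α : ℕ) (n : ℤ), α ≤ r + 1 → Mi α n * M α n = 1)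
    (hMsys : ∀ (α : ℕ) (n : ℤ), 1 ≤ α → α < r + 1 →
      (q : R) ^ α * M α (n + 1) * M α (n - 1) = M α n ^ 2 - M (α + 1) n * M (α - 1) n)
    (hcom : ∀ (α β ε : ℕ) (n : ℤ), ε ≤ 1 → α ≤ r + 1 → β ≤ r + 1 →
      M α n * M β (n + (ε : ℤ)) = (q : R) ^ (ε * min α β) * M β (n + (ε : ℤ)) * M α n)
    (n : ℤ) (m p : ℕ) :
    Commute (CMiura M Mi r m n) (CMiura M Mi r p n) := by
  obtain ⟨U, hU, hUinv⟩ := exists_units_eq hMiL hMiR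
  have hMsystem : IsMSystem q (r + 1) U := isMSystem_of_val_eq hU hq hM0 hMsys hcom
  have hcenter : (q : R) ∈ Subring.center R := Subring.mem_center_iff.2 fun x ↦ (hq x).symm
  rw [cMiura_eq_miuraCoeff, cMiura_eq_miuraCoeff]
  exact hMsystem.commute_miuraCoeff hcenter (fun k hk ↦ xv_succ_eq_todaX hU hUinv hk) n m p

theorem quantum_Q_conserved_quantities_commute
    {R : Type*} [Ring R] (q A Δ : Rˣ)
    (hq : ∀ x : R, (q : R) * x = x * (q : R))
    (r : ℕ) (hr : 1 ≤ r)
    (M Mi : ℕ → ℤ → R)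
    (hM0 : ∀ n : ℤ, M 0 n = 1)
    (hMtop : ∀ n : ℤ, M (r + 2) n = 0)
    (hMiL : ∀ (α : ℕ) (n : ℤ), α ≤ r + 1 → M α n * Mi α n = 1)
    (hMiR : ∀ (α : ℕ) (n : ℤ), α ≤ r + 1 → Mi α n * M α n = 1)
    (hMsys : ∀ (α : ℕ) (n : ℤ), 1 ≤ α → α ≤ r + 1 →
      (q : R) ^ α * M α (n + 1) * M α (n - 1) = M α n ^ 2 - M (α + 1) n * M (α - 1) n)
    (hcom : ∀ (α β ε : ℕ) (n : ℤ), ε ≤ 1 → α ≤ r + 1 → β ≤ r + 1 →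
      M α n * M β (n + (ε : ℤ)) = (q : R) ^ (ε * min α β) * M β (n + (ε : ℤ)) * M α n)
    (hAΔ : ∀ n : ℤ, M (r + 1) n = ((A ^ n : Rˣ) : R) * (Δ : R))
    (hΔM : ∀ (α : ℕ) (n : ℤ), 1 ≤ α → α ≤ r + 1 →
      (Δ : R) * M α n = ((q ^ ((α : ℤ) * n) : Rˣ) : R) * M α n * (Δ : R))
    (hAM : ∀ (α : ℕ) (n : ℤ), 1 ≤ α → α ≤ r + 1 →
      (A : R) * M α n = ((q ^ (-(α : ℤ)) : Rˣ) : R) * M α n * (A : R))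
    (hΔA : (Δ : R) * (A : R) = (q : R) ^ (r + 1) * (A : R) * (Δ : R))
    (hext : ∀ (α β : ℕ) (n p : ℤ), α ≤ r + 1 → β ≤ r + 1 →
      |p| ≤ |(β : ℤ) - (α : ℤ)| + 1 →
      M α n * M β (n + p) = ((q ^ (p * ((min α β : ℕ) : ℤ)) : Rˣ) : R) * M β (n + p) * M α n) :
    ∀ m p : ℕ, m ≤ r + 1 → p ≤ r + 1 →
      CMiura M Mi r m 0 * CMiura M Mi r p 0 = CMiura M Mi r p 0 * CMiura M Mi r m 0 := by
  intro m p _ _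
  exact quantum_Q_conserved_quantities_commute_general q hq r M Mi hM0 hMiL hMiR
    (fun α n hα hαr ↦ hMsys α n hα (by omega)) hcom 0 m p
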